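/- For every irrational real number α with 0 < α < 1, the set H \ {i·cot(απ)} is a Rolle's domain, where H = {z ∈ ℂ : Re(z) ≥ 0}. In particular, H is not a minimal Rolle's domain. -/

import Mathlib

/-- A set `R ⊆ ℂ` is a Rolle's domain if every nonconstant complex polynomial `P`
with `P(-1) = P(1)` has a critical point (a root of `P'`) lying in `R`. -/
def IsRollesDomain (R : Set ℂ) : Prop :=
  ∀ P : Polynomial ℂ, 0 < P.natDegree → P.eval (-1) = P.eval 1 →
    ∃ z ∈ R, P.derivative.eval z = 0

/-- A Rolle's domain `R` is minimal if no proper subset of `R` is a Rolle's domain. -/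
def IsMinimalRollesDomain (R : Set ℂ) : Prop :=
  IsRollesDomain R ∧ ∀ S : Set ℂ, S ⊂ R → ¬ IsRollesDomain S

/-!
If `P(-1) = P(1)`, then `f = P'` satisfies `∫₋₁¹ f = 0`, i.e. `f` is apolar to
`(X + 1) ^ n - (X - 1) ^ n`, where `n = deg P`. By Grace's theorem, a circular region containing all
roots of `f` contains a root of this polynomial. Grace's theorem rests on Laguerre's: if all roots
of `f` lie in `D` and `q ∉ D`, then so do those of the polar derivative of `f` with pole `q`. This
only uses that `D` is convex and stays convex when a point outside `D` is sent to infinity, which is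
also true of an open half-plane together with one boundary point `c`. The roots of
`(X + 1) ^ n - (X - 1) ^ n` are `i cot(kπ/n)` with `0 < k < n`; they lie on the imaginary axis and
differ from `c = i cot(απ)` when `α` is irrational. So not all roots of `f` lie in
`{Re z < 0} ∪ {c}`.
-/

open Polynomial

section ConvexSets

variable {E : Type*} [AddCommGroup E] [Module ℝ E]

lemma mem_of_multiset_sum_eq_card_nsmul {s : Set E} (hs : Convex ℝ s) {t : Multiset E} {x : E}
    (ht : t ≠ 0) (hts : ∀ y ∈ t, y ∈ s) (hx : t.sum = t.card • x) : x ∈ s := by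
  classical
  have hcard : (t.card : ℝ) ≠ 0 := by simpa using ht
  have hmean : x = ∑ y ∈ t.toFinset, ((t.card : ℝ)⁻¹ * t.count y) • y := by
    rw [← inv_smul_smul₀ hcard x, Nat.cast_smul_eq_nsmul, ← hx, Finset.sum_multiset_count,
      Finset.smul_sum]
    simp only [mul_smul, Nat.cast_smul_eq_nsmul]
  rw [hmean]
  refine hs.sum_mem (fun y _ ↦ by positivity) ?_ fun y hy ↦ hts y (Multiset.mem_toFinset.1 hy)
  rw [← Finset.mul_sum, ← Nat.cast_sum, Multiset.toFinset_sum_count_eq, inv_mul_cancel₀ hcard]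

lemma convex_insert_of_isOpen_of_mem_closure [TopologicalSpace E] [IsTopologicalAddGroup E]
    [ContinuousConstSMul ℝ E] {s : Set E} (hs : Convex ℝ s) (hso : IsOpen s) {c : E}
    (hc : c ∈ closure s) : Convex ℝ (insert c s) := by
  have hseg : ∀ x ∈ s, openSegment ℝ x c ⊆ s := fun x hx ↦ by
    simpa only [hso.interior_eq] using
      hs.openSegment_interior_closure_subset_interior (hso.interior_eq.symm ▸ hx) hc
  refine convex_iff_openSegment_subset.2 ?_
  rintro x (rfl | hx) y (rfl | hy)
  · simp
  · exact openSegment_symm ℝ y x ▸ (hseg y hy).trans (Set.subset_insert x s)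
  · exact (hseg x hx).trans (Set.subset_insert y s)
  · exact (hs.openSegment_subset hx hy).trans (Set.subset_insert c s)

end ConvexSets

/-- A generalized circular region in the sense of Zervos: a set that is convex as seen from every
point of the Riemann sphere outside it. The region is taken not to contain `∞`; the field
`convex` is convexity as seen from `∞`, and `convex_image_inv_sub` sends `z` to `∞`. -/
structure IsGeneralizedCircularRegion (D : Set ℂ) : Prop where
  convex : Convex ℝ D
  convex_image_inv_sub : ∀ z ∉ D, Convex ℝ ((fun r ↦ (z - r)⁻¹) '' D)

lemma image_inv_sub_setOf_re_neg {z : ℂ} (hz : 0 ≤ z.re) :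
    (fun r ↦ (z - r)⁻¹) '' {r : ℂ | r.re < 0} = {w : ℂ | z.re * ‖w‖ ^ 2 - w.re < 0} := by
  ext w
  constructor
  · rintro ⟨r, hr : r.re < 0, rfl⟩
    have hzr : z - r ≠ 0 := fun h ↦ by
      rw [sub_eq_zero.1 h] at hz
      exact hz.not_gt hr
    have hpos := Complex.normSq_pos.2 hzr
    simp only [Set.mem_ofPred_eq, ← Complex.normSq_eq_norm_sq, map_inv₀, Complex.inv_re,
      Complex.sub_re]
    field_simp
    linarith
  · intro (hw : z.re * ‖w‖ ^ 2 - w.re < 0)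
    have hw₀ : w ≠ 0 := by rintro rfl; simp at hw
    have hpos := Complex.normSq_pos.2 hw₀
    refine ⟨z - w⁻¹, ?_, by simp⟩
    rw [← Complex.normSq_eq_norm_sq] at hw
    simp only [Set.mem_ofPred_eq, Complex.sub_re, Complex.inv_re]
    field_simp
    linarith

lemma isGeneralizedCircularRegion_insert_setOf_re_neg {c : ℂ} (hc : c.re = 0) :
    IsGeneralizedCircularRegion (insert c {z : ℂ | z.re < 0}) := by
  have hmem : c ∈ closure {z : ℂ | z.re < 0} := by
    rw [Complex.closure_setOfPred_re_lt]
    exact hc.le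
  refine ⟨convex_insert_of_isOpen_of_mem_closure (convex_halfSpace_re_lt 0)
    (isOpen_lt Complex.continuous_re continuous_const) hmem, fun z hz ↦ ?_⟩
  simp only [Set.mem_insert_iff, Set.mem_ofPred_eq, not_or, not_lt] at hz
  have hcont : ContinuousAt (fun r : ℂ ↦ (z - r)⁻¹) c :=
    (by fun_prop : ContinuousAt (fun r : ℂ ↦ z - r) c).inv₀ (sub_ne_zero.2 hz.1)
  have himage := mem_closure_image hcont hmem
  rw [Set.image_insert_eq]
  rw [image_inv_sub_setOf_re_neg hz.2] at himage ⊢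
  refine convex_insert_of_isOpen_of_mem_closure ?_ (isOpen_lt (by fun_prop) continuous_const) himage
  have hconvex : ConvexOn ℝ Set.univ fun w : ℂ ↦ z.re * ‖w‖ ^ 2 - w.re :=
    ((convexOn_univ_norm.pow (fun w _ ↦ norm_nonneg w) 2).smul hz.2).sub
      (Complex.reLm.concaveOn convex_univ)
  simpa only [Set.mem_univ, true_and] using hconvex.convex_lt 0

section PolarDerivative

variable {R : Type*} [CommRing R]

/-- The polar derivative with pole `q` of a polynomial `f` regarded as having degree `n`. It is the
derivative of the homogenization of `f` in the direction of `q`, hence lowers the degree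
to `n - 1`. -/
noncomputable def polarDerivative (n : ℕ) (q : R) : R[X] →ₗ[R] R[X] :=
  (n : R) • LinearMap.id + LinearMap.mulLeft R (C q - X) ∘ₗ derivative

lemma polarDerivative_apply (n : ℕ) (q : R) (f : R[X]) :
    polarDerivative n q f = C (n : R) * f + (C q - X) * derivative f := by
  simp [polarDerivative, smul_eq_C_mul]

lemma eval_polarDerivative (n : ℕ) (q z : R) (f : R[X]) :
    (polarDerivative n q f).eval z = n * f.eval z + (q - z) * f.derivative.eval z := by
  simp [polarDerivative_apply]

lemma coeff_polarDerivative (n : ℕ) (q : R) (f : R[X]) (k : ℕ) :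
    (polarDerivative n q f).coeff k = (n - k) * f.coeff k + (k + 1) * q * f.coeff (k + 1) := by
  rw [polarDerivative_apply, sub_mul, coeff_add, coeff_sub, coeff_C_mul, coeff_C_mul,
    coeff_derivative]
  cases k with
  | zero => simp
  | succ k => rw [coeff_X_mul, coeff_derivative]; push_cast; ring

lemma natDegree_polarDerivative_le {n : ℕ} {f : R[X]} (hf : f.natDegree ≤ n + 1) (q : R) :
    (polarDerivative (n + 1) q f).natDegree ≤ n := by
  refine natDegree_le_iff_coeff_eq_zero.2 fun k hk ↦ ?_
  rw [coeff_polarDerivative, coeff_eq_zero_of_natDegree_lt (n := k + 1) (by omega)]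
  obtain rfl | hk' := (Nat.succ_le_of_lt hk).eq_or_lt
  · simp
  · simp [coeff_eq_zero_of_natDegree_lt (hf.trans_lt hk')]

lemma polarDerivative_X_sub_C_pow (n : ℕ) (q a : R) :
    polarDerivative (n + 1) q ((X - C a) ^ (n + 1)) = ((n + 1) * (q - a)) • (X - C a) ^ n := by
  rw [polarDerivative_apply, derivative_X_sub_C_pow, smul_eq_C_mul]
  simp only [map_mul, map_sub, map_add, map_one, map_natCast, Nat.cast_add, Nat.cast_one,
    Nat.add_sub_cancel]
  ring

/-- The polarization of a polynomial `f` regarded as having degree `n`, up to the factor `n!`: the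
value at the `n` listed points of the symmetric multiaffine form associated with `f`, obtained by
taking successive polar derivatives down to a constant, which is read off by evaluating at `0`.
It vanishes exactly when `f` is apolar to the polynomial with these `n` points as roots. -/
noncomputable def polarForm : List R → R[X] →ₗ[R] R
  | [] => leval 0
  | q :: qs => polarForm qs ∘ₗ polarDerivative (qs.length + 1) q

lemma polarForm_X_sub_C_pow (qs : List R) (a : R) :
    polarForm qs ((X - C a) ^ qs.length) = qs.length.factorial * (qs.map (· - a)).prod := by
  induction qs with
  | nil => simp [polarForm]
  | cons q qs ih =>
    rw [polarForm, LinearMap.comp_apply, List.length_cons, polarDerivative_X_sub_C_pow, map_smul,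
      ih, List.map_cons, List.prod_cons, Nat.factorial_succ, smul_eq_mul]
    push_cast
    ring

end PolarDerivative

section Grace

variable {D : Set ℂ} {f : ℂ[X]} {n : ℕ} {q : ℂ}

lemma coeff_polarDerivative_ne_zero (hD : Convex ℝ D) (hf : f.natDegree = n + 1)
    (hroots : ∀ z, f.IsRoot z → z ∈ D) (hq : q ∉ D) :
    (polarDerivative (n + 1) q f).coeff n ≠ 0 := by
  have hsplits : f.Splits := IsAlgClosed.splits f
  have hcard : f.roots.card = n + 1 := by rw [← hsplits.natDegree_eq_card_roots, hf]
  have hlead : f.leadingCoeff ≠ 0 := leadingCoeff_ne_zero.2 (by rintro rfl; simp at hf)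
  have hcoeff : f.coeff n = -f.leadingCoeff * f.roots.sum := by
    rw [← hsplits.nextCoeff_eq_neg_sum_roots_mul_leadingCoeff,
      nextCoeff_of_natDegree_pos (by omega), hf, Nat.add_sub_cancel]
  intro hzero
  rw [coeff_polarDerivative, hcoeff, ← hf, coeff_natDegree, hf] at hzero
  push_cast at hzero
  refine hq (mem_of_multiset_sum_eq_card_nsmul hD (Multiset.card_pos.1 (by omega))
    (fun r hr ↦ hroots r (isRoot_of_mem_roots hr)) (mul_left_cancel₀ hlead ?_))
  rw [hcard, nsmul_eq_mul]
  push_cast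
  linear_combination -hzero

/-- Laguerre's theorem: sending `z` to infinity makes `q` the mean of the roots of `f`. -/
lemma mem_of_isRoot_polarDerivative (hD : IsGeneralizedCircularRegion D) (hf : f.natDegree = n + 1)
    (hroots : ∀ z, f.IsRoot z → z ∈ D) (hq : q ∉ D) {z : ℂ}
    (hz : (polarDerivative (n + 1) q f).IsRoot z) : z ∈ D := by
  by_contra hzD
  have hsplits : f.Splits := IsAlgClosed.splits f
  have hcard : f.roots.card = n + 1 := by rw [← hsplits.natDegree_eq_card_roots, hf]
  have hfz : f.eval z ≠ 0 := fun h ↦ hzD (hroots z h)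
  rw [IsRoot, eval_polarDerivative] at hz
  have hzq : z - q ≠ 0 := by
    intro h
    rw [← sub_eq_zero.1 h, sub_self, zero_mul, add_zero] at hz
    exact mul_ne_zero (Nat.cast_ne_zero.2 n.succ_ne_zero) hfz hz
  have hmean : (f.roots.map fun r ↦ (z - r)⁻¹).sum = f.roots.card • (z - q)⁻¹ := by
    simp only [← one_div]
    rw [← hsplits.eval_derivative_div_eval_of_ne_zero hfz, hcard, nsmul_eq_mul]
    field_simp
    linear_combination -hz
  obtain ⟨r, hrD, hr⟩ : (z - q)⁻¹ ∈ (fun r ↦ (z - r)⁻¹) '' D := by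
    refine mem_of_multiset_sum_eq_card_nsmul (hD.convex_image_inv_sub z hzD)
      (t := f.roots.map fun r ↦ (z - r)⁻¹) (Multiset.card_pos.1 ?_) ?_ ?_
    · rw [Multiset.card_map]; omega
    · intro w hw
      obtain ⟨r, hr, rfl⟩ := Multiset.mem_map.1 hw
      exact ⟨r, hroots r (isRoot_of_mem_roots hr), rfl⟩
    · rw [Multiset.card_map, hmean]
  exact hq (sub_right_injective (inv_injective hr) ▸ hrD)

/-- Grace's theorem: `f` is not apolar to the polynomial with roots `qs`. -/
lemma polarForm_ne_zero (hD : IsGeneralizedCircularRegion D) {qs : List ℂ}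
    (hqs : ∀ q ∈ qs, q ∉ D) (hf₀ : f ≠ 0) (hf : f.natDegree = qs.length)
    (hroots : ∀ z, f.IsRoot z → z ∈ D) : polarForm qs f ≠ 0 := by
  induction qs generalizing f with
  | nil =>
    rw [eq_C_of_natDegree_eq_zero hf] at hf₀ ⊢
    simpa [polarForm] using hf₀
  | cons q qs ih =>
    rw [List.forall_mem_cons] at hqs
    have hcoeff := coeff_polarDerivative_ne_zero hD.convex hf hroots hqs.1
    refine ih hqs.2 (fun h ↦ hcoeff (by rw [h, coeff_zero])) ?_
      fun z ↦ mem_of_isRoot_polarDerivative hD hf hroots hqs.1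
    exact natDegree_eq_of_le_of_coeff_ne_zero (natDegree_polarDerivative_le hf.le q) hcoeff

end Grace

section Kernel

variable {R : Type*} [CommRing R] [IsDomain R] [CharZero R]

lemma map_eq_zero_of_forall_map_X_sub_C_pow {T : R[X] →ₗ[R] R} {n : ℕ}
    (hT : ∀ a : R, T ((X - C a) ^ n) = 0) {f : R[X]} (hf : f.natDegree ≤ n) : T f = 0 := by
  -- `F` is the polynomial function `a ↦ T ((X + a) ^ n)`, which vanishes identically.
  let F : R[X] := ∑ k ∈ Finset.range (n + 1), monomial k (T (X ^ (n - k)) * n.choose k)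
  have hF : F = 0 := Polynomial.funext fun a ↦ by
    have hexpand : (X - C (-a)) ^ n
        = ∑ k ∈ Finset.range (n + 1), (a ^ k * n.choose k) • (X : R[X]) ^ (n - k) := by
      rw [map_neg, sub_neg_eq_add, add_comm, add_pow]
      refine Finset.sum_congr rfl fun k _ ↦ ?_
      rw [smul_eq_C_mul, C_mul, C_pow, map_natCast]
      ring
    rw [eval_zero, ← hT (-a), hexpand, map_sum, eval_finsetSum]
    refine Finset.sum_congr rfl fun k _ ↦ ?_
    rw [eval_monomial, map_smul, smul_eq_mul]
    ring
  have hpow : ∀ k ≤ n, T (X ^ k) = 0 := fun k hk ↦ by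
    have hcoeff : F.coeff (n - k) = T (X ^ k) * n.choose k := by
      simp only [F, finsetSum_coeff, coeff_monomial, Finset.sum_ite_eq']
      rw [if_pos (Finset.mem_range.2 (by omega)), Nat.sub_sub_self hk, Nat.choose_symm hk]
    rw [hF, coeff_zero, zero_eq_mul] at hcoeff
    exact hcoeff.resolve_right (Nat.cast_ne_zero.2 (Nat.choose_pos hk).ne')
  rw [f.as_sum_range_C_mul_X_pow, map_sum]
  refine Finset.sum_eq_zero fun k hk ↦ ?_
  rw [← smul_eq_C_mul, map_smul, hpow k (by grind), smul_zero]

lemma natDegree_X_add_one_pow_sub_X_sub_one_pow (n : ℕ) :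
    ((X + 1) ^ (n + 1) - (X - 1) ^ (n + 1) : R[X]).natDegree = n := by
  rw [← C_1, sub_eq_add_neg X, ← C_neg]
  refine natDegree_eq_of_le_of_coeff_ne_zero
    (natDegree_le_iff_coeff_eq_zero.2 fun k hk ↦ ?_) ?_
  · rw [coeff_sub, coeff_X_add_C_pow, coeff_X_add_C_pow]
    obtain rfl | hk' := (Nat.succ_le_of_lt hk).eq_or_lt
    · simp
    · simp [Nat.choose_eq_zero_of_lt hk']
  · rw [coeff_sub, coeff_X_add_C_pow, coeff_X_add_C_pow, Nat.add_sub_cancel_left,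
      Nat.choose_succ_self_right]
    have hn : (n + 1 : R) ≠ 0 := n.cast_add_one_ne_zero
    push_cast
    intro h
    exact mul_ne_zero two_ne_zero hn (by linear_combination h)

lemma exists_one_sub_pow_sub_neg_one_sub_pow_eq (K : Type*) [Field K] [CharZero K]
    [IsAlgClosed K] (n : ℕ) :
    ∃ k : K, k ≠ 0 ∧ ∃ qs : List K, qs.length = n ∧
      ∀ a, (1 - a) ^ (n + 1) - (-1 - a) ^ (n + 1) = k * (qs.map (· - a)).prod := by
  set g : K[X] := (X + 1) ^ (n + 1) - (X - 1) ^ (n + 1) with hg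
  have hdeg : g.natDegree = n := natDegree_X_add_one_pow_sub_X_sub_one_pow n
  have hg₀ : g ≠ 0 := by
    intro h
    have := congrArg (eval 1) h
    simp [hg] at this
  have hsplits : g.Splits := IsAlgClosed.splits g
  refine ⟨g.leadingCoeff, leadingCoeff_ne_zero.2 hg₀, g.roots.toList.map Neg.neg, ?_, fun a ↦ ?_⟩
  · rw [List.length_map, Multiset.length_toList, ← hsplits.natDegree_eq_card_roots, hdeg]
  · calc (1 - a) ^ (n + 1) - (-1 - a) ^ (n + 1) = g.eval (-a) := by
          simp only [hg, eval_sub, eval_pow, eval_add, eval_X, eval_one]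
          ring
      _ = g.leadingCoeff * (g.roots.map (-a - ·)).prod := hsplits.eval_eq_prod_roots (-a)
      _ = g.leadingCoeff * ((g.roots.toList.map Neg.neg).map (· - a)).prod := by
          rw [← Multiset.prod_map_toList, List.map_map]
          simp only [Function.comp_def, neg_sub_comm]

lemma mul_polarForm_derivative {k : R} {qs : List R}
    (hqs : ∀ a, (1 - a) ^ (qs.length + 1) - (-1 - a) ^ (qs.length + 1)
      = k * (qs.map (· - a)).prod) {P : R[X]} (hP : P.natDegree ≤ qs.length + 1) :
    k * polarForm qs (derivative P)
      = (qs.length + 1).factorial * (P.eval 1 - P.eval (-1)) := by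
  let T : R[X] →ₗ[R] R := k • (polarForm qs ∘ₗ derivative)
    - ((qs.length + 1).factorial : R) • (leval 1 - leval (-1))
  have hT : ∀ a, T ((X - C a) ^ (qs.length + 1)) = 0 := fun a ↦ by
    have hderiv : derivative ((X - C a) ^ (qs.length + 1))
        = (qs.length + 1 : R) • (X - C a) ^ qs.length := by
      simp [derivative_X_sub_C_pow, smul_eq_C_mul]
    simp only [T, LinearMap.sub_apply, LinearMap.smul_apply, LinearMap.comp_apply, hderiv, map_smul,
      polarForm_X_sub_C_pow, leval_apply, eval_pow, eval_sub, eval_X, eval_C, smul_eq_mul, hqs,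
      Nat.factorial_succ]
    push_cast
    ring
  exact sub_eq_zero.1 (map_eq_zero_of_forall_map_X_sub_C_pow hT hP)

end Kernel

section RollesDomain

lemma isRollesDomain_compl {D : Set ℂ} (hD : IsGeneralizedCircularRegion D)
    (hne : ∀ q ∈ D, ∀ n ≠ 0, (q + 1) ^ n ≠ (q - 1) ^ n) : IsRollesDomain Dᶜ := by
  intro P hP heval
  by_contra! hcrit
  obtain ⟨n, hn⟩ := Nat.exists_eq_add_one.2 hP
  obtain ⟨k, hk, qs, rfl, hqs⟩ := exists_one_sub_pow_sub_neg_one_sub_pow_eq ℂ n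
  have hqsD : ∀ q ∈ qs, q ∉ D := fun q hq hqD ↦ by
    have hprod : (qs.map (· - q)).prod = 0 :=
      List.prod_eq_zero (List.mem_map.2 ⟨q, hq, sub_self q⟩)
    have hroot : (1 - q) ^ (qs.length + 1) = (-1 - q) ^ (qs.length + 1) := by
      rw [← sub_eq_zero, hqs, hprod, mul_zero]
    refine hne q hqD (qs.length + 1) (Nat.succ_ne_zero _) ?_
    rw [← neg_sub q 1, show -1 - q = -(q + 1) by ring, neg_pow, neg_pow (q + 1)] at hroot
    exact (mul_left_cancel₀ (pow_ne_zero _ (neg_ne_zero.2 one_ne_zero)) hroot).symm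
  have hdeg : P.derivative.natDegree = qs.length := by
    rw [natDegree_derivative, hn, add_tsub_cancel_right]
  have hderiv : P.derivative ≠ 0 := fun h ↦ hP.ne' (derivative_eq_zero.1 h)
  have hform := mul_polarForm_derivative hqs hn.le
  rw [heval, sub_self, mul_zero] at hform
  exact mul_ne_zero hk (polarForm_ne_zero hD hqsD hderiv hdeg
    fun z hz ↦ not_not.1 fun hzD ↦ hcrit z hzD hz) hform

lemma add_one_pow_ne_sub_one_pow_of_re_neg {z : ℂ} (hz : z.re < 0) {n : ℕ} (hn : n ≠ 0) :
    (z + 1) ^ n ≠ (z - 1) ^ n := by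
  have hlt : ‖z + 1‖ < ‖z - 1‖ := by
    rw [← sq_lt_sq₀ (norm_nonneg _) (norm_nonneg _), ← Complex.normSq_eq_norm_sq,
      ← Complex.normSq_eq_norm_sq, Complex.normSq_add, Complex.normSq_sub]
    simp only [map_one, mul_one]
    linarith
  intro h
  have hnorm := congrArg norm h
  rw [norm_pow, norm_pow] at hnorm
  exact (pow_lt_pow_left₀ hlt (norm_nonneg _) hn).ne hnorm

lemma exp_two_mul_I_mul_pow_ne_one {α : ℝ} (hα : Irrational α) {n : ℕ} (hn : n ≠ 0) :
    Complex.exp (2 * Complex.I * ↑(α * Real.pi)) ^ n ≠ 1 := by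
  rw [← Complex.exp_nat_mul, Ne, Complex.exp_eq_one_iff]
  rintro ⟨k, hk⟩
  have hnα : (n : ℂ) * α = k := by
    refine mul_right_cancel₀ Complex.two_pi_I_ne_zero ?_
    rw [← hk]
    push_cast
    ring
  exact (hα.natCast_mul hn).ne_int k (mod_cast hnα)

lemma I_mul_cot_add_one_pow_ne_sub_one_pow {α : ℝ} (hα : Irrational α) {n : ℕ} (hn : n ≠ 0) :
    (Complex.I * (Real.cot (α * Real.pi) : ℂ) + 1) ^ n
      ≠ (Complex.I * (Real.cot (α * Real.pi) : ℂ) - 1) ^ n := by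
  rw [Complex.ofReal_cot, Complex.cot_eq_exp_ratio]
  set e := Complex.exp (2 * Complex.I * ↑(α * Real.pi))
  have he : 1 - e ≠ 0 :=
    sub_ne_zero.2 (by simpa only [pow_one] using (exp_two_mul_I_mul_pow_ne_one hα one_ne_zero).symm)
  have hadd : Complex.I * ((e + 1) / (Complex.I * (1 - e))) + 1 = 2 / (1 - e) := by
    field_simp
    ring
  have hsub : Complex.I * ((e + 1) / (Complex.I * (1 - e))) - 1 = 2 / (1 - e) * e := by
    field_simp
    ring
  rw [hadd, hsub, mul_pow, Ne, left_eq_mul₀ (pow_ne_zero n (div_ne_zero two_ne_zero he))]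
  exact exp_two_mul_I_mul_pow_ne_one hα hn

theorem half_plane_minus_point_is_rolles_domain_general {α : ℝ} (hα : Irrational α) :
    IsRollesDomain ({z : ℂ | 0 ≤ z.re} \ {Complex.I * (Real.cot (α * Real.pi) : ℂ)}) := by
  set c : ℂ := Complex.I * (Real.cot (α * Real.pi) : ℂ)
  have hc : c.re = 0 := by simp [c, -Complex.ofReal_cot]
  have hcompl : (insert c {z : ℂ | z.re < 0})ᶜ = {z : ℂ | 0 ≤ z.re} \ {c} := by
    ext z
    simp [and_comm]
  rw [← hcompl]
  refine isRollesDomain_compl (isGeneralizedCircularRegion_insert_setOf_re_neg hc) ?_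
  rintro q (rfl | hq) n hn
  · exact I_mul_cot_add_one_pow_ne_sub_one_pow hα hn
  · exact add_one_pow_ne_sub_one_pow_of_re_neg hq hn

lemma not_isMinimalRollesDomain_setOf_re_nonneg :
    ¬ IsMinimalRollesDomain {z : ℂ | 0 ≤ z.re} := fun h ↦
  h.2 _ (Set.sdiff_singleton_ssubset.2 (by simp [-Complex.ofReal_cot]))
    (half_plane_minus_point_is_rolles_domain_general irrational_sqrt_two)

end RollesDomain

theorem half_plane_minus_point_is_rolles_domain :
    (∀ α : ℝ, Irrational α → 0 < α → α < 1 →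
      IsRollesDomain ({z : ℂ | 0 ≤ z.re} \ {Complex.I * (Real.cot (α * Real.pi) : ℂ)}))
    ∧ ¬ IsMinimalRollesDomain {z : ℂ | 0 ≤ z.re} :=
  ⟨fun _ hα _ _ ↦ half_plane_minus_point_is_rolles_domain_general hα,
    not_isMinimalRollesDomain_setOf_re_nonneg⟩
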